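/- There exists an absolute constant c > 0 such that for every n ≥ m_0, the Nörlund logarithmic kernel satisfies ∫_0^1 |F_{p_n}(x)| dx ≥ c·n. -/

import Mathlib

open MeasureTheory Filter

noncomputable section

/-- The unit cube `[0,1)^d`. -/
def unitCube (d : ℕ) : Set (Fin d → ℝ) := Set.univ.pi fun _ => Set.Ico (0:ℝ) 1

/-- Lebesgue measure restricted to the unit cube `[0,1)^d`. -/
def cubeMeasure (d : ℕ) : Measure (Fin d → ℝ) := volume.restrict (unitCube d)

/-- The `1`-periodic function equal to `1` on `[0,1/2)` and to `-1` on `[1/2,1)`. -/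
def r0 (x : ℝ) : ℝ := if Int.fract x < 1/2 then 1 else -1

/-- The Rademacher functions. -/
def rademacher (n : ℕ) (x : ℝ) : ℝ := r0 (2 ^ n * x)

/-- The Walsh functions (in Paley enumeration, via binary digits). -/
def walsh (n : ℕ) (x : ℝ) : ℝ :=
  ∏ k ∈ Finset.range (n + 1), if n.testBit k then rademacher k x else 1

/-- The Walsh–Dirichlet kernel `D_n`. -/
def dirichletKernel (n : ℕ) (x : ℝ) : ℝ := ∑ k ∈ Finset.range n, walsh k x

/-- `l_n = ∑_{k=1}^{n-1} 1/k`. -/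
def logSum (n : ℕ) : ℝ := ∑ k ∈ Finset.Icc 1 (n - 1), (1 : ℝ) / k

/-- The Nörlund logarithmic kernel `F_n`. -/
def FKernel (n : ℕ) (u : ℝ) : ℝ :=
  (1 / logSum n) * ∑ i ∈ Finset.Ico 1 n, dirichletKernel (n - i) u / i

/-- The Riesz logarithmic kernel `G_n`. -/
def GKernel (n : ℕ) (u : ℝ) : ℝ :=
  (1 / logSum n) * ∑ i ∈ Finset.Ico 1 n, dirichletKernel i u / i

/-- Walsh–Fourier coefficient of `f` on the unit cube. -/
def walshCoef {d : ℕ} (f : (Fin d → ℝ) → ℝ) (j : Fin d → ℕ) : ℝ :=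
  ∫ x, f x * ∏ i, walsh (j i) (x i) ∂(cubeMeasure d)

/-- Rectangular partial sums of the multiple Walsh–Fourier series. -/
def rectPartialSum {d : ℕ} (f : (Fin d → ℝ) → ℝ) (N : Fin d → ℕ) (x : Fin d → ℝ) : ℝ :=
  ∑ j ∈ Fintype.piFinset (fun i => Finset.range (N i)),
    walshCoef f j * ∏ i, walsh (j i) (x i)

/-- The mixed logarithmic means `(L_{n_B} ∘ R_{n_{B'}})(f)`. -/
def mixedLogMean {d : ℕ} (B : Finset (Fin d)) (f : (Fin d → ℝ) → ℝ)
    (n : Fin d → ℕ) (x : Fin d → ℝ) : ℝ :=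
  (∏ j, logSum (n j))⁻¹ *
    ∑ i ∈ Fintype.piFinset (fun j => Finset.Ico 1 (n j)),
      rectPartialSum f (fun j => if j ∈ B then n j - i j else i j) x / ∏ j, (i j : ℝ)

/-- A Young function: convex, continuous, even, vanishing at `0`, with
`Q(u)/u → ∞` at `+∞` and `Q(u)/u → 0` at `0`. -/
structure YoungFunction where
  toFun : ℝ → ℝ
  nonneg : ∀ u, 0 ≤ toFun u
  convexOn : ConvexOn ℝ Set.univ toFun
  continuous : Continuous toFun
  even : ∀ u, toFun (-u) = toFun u
  map_zero : toFun 0 = 0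
  tendsto_atTop : Tendsto (fun u => toFun u / u) atTop atTop
  tendsto_zero : Tendsto (fun u => toFun u / u) (nhdsWithin 0 {(0:ℝ)}ᶜ) (nhds 0)

/-- The set of admissible constants `k` in the Luxemburg norm of `f`. -/
def orliczSet {d : ℕ} (Q : YoungFunction) (f : (Fin d → ℝ) → ℝ) : Set ℝ :=
  {k | 0 < k ∧ Integrable (fun x => Q.toFun (|f x| / k)) (cubeMeasure d) ∧
    ∫ x, Q.toFun (|f x| / k) ∂(cubeMeasure d) ≤ 1}

/-- `f` belongs to the Orlicz space `L_Q(I^d)`. -/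
def MemOrlicz {d : ℕ} (Q : YoungFunction) (f : (Fin d → ℝ) → ℝ) : Prop :=
  Measurable f ∧ (orliczSet Q f).Nonempty

/-- The Luxemburg norm on the Orlicz space `L_Q(I^d)`. -/
def orliczNorm {d : ℕ} (Q : YoungFunction) (f : (Fin d → ℝ) → ℝ) : ℝ :=
  sInf (orliczSet Q f)

/-- `p_n = 2^{2n} + 2^{2n-2} + ⋯ + 2^0`. -/
def pIdx (n : ℕ) : ℕ := ∑ k ∈ Finset.range (n + 1), 4 ^ k

/-- `m̃ = ⌊ l_{p_{⌊m/2⌋}-1}/16 - 2^15 ⌋`. -/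
def mTilde (m : ℕ) : ℤ := ⌊logSum (pIdx (m / 2) - 1) / 16 - 2 ^ 15⌋

/-- `m₀ = min{m : m̃ > 1}`. -/
def m₀ : ℕ := sInf {m : ℕ | 1 < mTilde m}

/-- The set `Ω_n`. -/
def Omega (n : ℕ) : Set ℝ :=
  ⋃ m ∈ Finset.Icc n (2 * n),
    Set.Ico ((2:ℝ) ^ (-(m:ℤ) - 1) + (2:ℝ) ^ (-(m:ℤ) - mTilde m)) ((2:ℝ) ^ (-(m:ℤ)))

/-- `k`-th binary digit of `x` (the expansion not terminating in `1`'s). -/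
def binDigit (k : ℕ) (x : ℝ) : ℕ := (⌊x * 2 ^ (k + 1)⌋).toNat % 2

/-- Dyadic addition on `[0,1)`. -/
def dyadicAdd (x t : ℝ) : ℝ :=
  ∑' k : ℕ, |(binDigit k x : ℝ) - (binDigit k t : ℝ)| / 2 ^ (k + 1)

/-- Dyadic convolution `f ∗ K` on `[0,1)`. -/
def dyadicConv (f K : ℝ → ℝ) (x : ℝ) : ℝ :=
  ∫ t in Set.Ico (0:ℝ) 1, f t * K (dyadicAdd x t)

/-- Lebesgue measure restricted to `[0,1)`. -/
def unitMeasure : Measure ℝ := volume.restrict (Set.Ico (0:ℝ) 1)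

/-- A set `A ⊆ L_Q(I^d)` is nowhere dense w.r.t. the Luxemburg norm. -/
def OrliczNowhereDense {d : ℕ} (Q : YoungFunction) (A : Set ((Fin d → ℝ) → ℝ)) : Prop :=
  ∀ f, MemOrlicz Q f → ∀ ε > 0, ∃ g, MemOrlicz Q g ∧ ∃ δ > 0,
    (∀ h, MemOrlicz Q h → orliczNorm Q (h - g) < δ → orliczNorm Q (h - f) < ε) ∧
    (∀ h, MemOrlicz Q h → orliczNorm Q (h - g) < δ → h ∉ A)

/-- A set `A ⊆ L_Q(I^d)` is of first Baire category (meager) w.r.t. the Luxemburg norm. -/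
def OrliczMeager {d : ℕ} (Q : YoungFunction) (A : Set ((Fin d → ℝ) → ℝ)) : Prop :=
  ∃ F : ℕ → Set ((Fin d → ℝ) → ℝ), (∀ k, OrliczNowhereDense Q (F k)) ∧ A ⊆ ⋃ k, F k

lemma walsh_eq (n N : ℕ) (h : n < 2 ^ N) (x : ℝ) :
    walsh n x = ∏ k ∈ Finset.range N, if n.testBit k then rademacher k x else 1 := by
  have key : ∀ M, n < 2 ^ M → M ≤ N + (n + 1) →
      ∏ k ∈ Finset.range M, (if n.testBit k then rademacher k x else 1) =
      ∏ k ∈ Finset.range (N + (n+1)), (if n.testBit k then rademacher k x else 1) := by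
    intro M hM hle
    apply Finset.prod_subset (Finset.range_mono hle)
    intro k _ hk
    have hk : M ≤ k := by simpa using hk
    have : n.testBit k = false :=
      Nat.testBit_lt_two_pow (lt_of_lt_of_le hM (Nat.pow_le_pow_right (by norm_num) hk))
    simp [this]
  unfold walsh
  rw [key N h (by omega), key (n+1) (lt_trans n.lt_succ_self Nat.lt_two_pow_self) (by omega)]

lemma walsh_add (N a b : ℕ) (hb : b < 2 ^ N) (x : ℝ) :
    walsh (2 ^ N * a + b) x = walsh (2 ^ N * a) x * walsh b x := by
  have ha : a < 2 ^ a := Nat.lt_two_pow_self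
  have gen : ∀ b, b < 2 ^ N → walsh (2 ^ N * a + b) x = walsh b x *
      ∏ k ∈ Finset.range a, if a.testBit k then rademacher (N + k) x else 1 := by
    intro b hb
    have hlt : 2 ^ N * a + b < 2 ^ (N + a) := by
      rw [pow_add]; nlinarith
    rw [walsh_eq _ (N + a) hlt, Finset.prod_range_add, walsh_eq b N hb]
    congr 1
    · apply Finset.prod_congr rfl
      intro k hk
      have hk := Finset.mem_range.1 hk
      rw [Nat.testBit_two_pow_mul_add _ hb]
      simp [hk]
    · apply Finset.prod_congr rfl
      intro k hk
      rw [Nat.testBit_two_pow_mul_add _ hb]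
      simp
  have h0 := gen 0 (by positivity)
  have hb := gen b hb
  have hw : walsh 0 x = 1 := by simp [walsh]
  rw [add_zero, hw] at h0
  rw [hb, h0]; ring

lemma walsh_two_pow (N : ℕ) (x : ℝ) : walsh (2 ^ N) x = rademacher N x := by
  rw [walsh_eq _ (N+1) (Nat.pow_lt_pow_right (by norm_num) (by omega)),
    Finset.prod_range_succ, Finset.prod_eq_one]
  · simp
  · intro k hk
    have := Finset.mem_range.1 hk
    rw [Nat.testBit_two_pow_of_ne (by omega)]; simp

lemma rademacher_abs (n : ℕ) (x : ℝ) : |rademacher n x| = 1 := by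
  unfold rademacher r0; split_ifs <;> simp

lemma walsh_abs (n : ℕ) (x : ℝ) : |walsh n x| = 1 := by
  unfold walsh
  rw [Finset.abs_prod, Finset.prod_eq_one]
  intro k _
  split_ifs
  · exact rademacher_abs _ _
  · simp

lemma walsh_one_of_lt (m : ℕ) (x : ℝ) (h : ∀ k < m, rademacher k x = 1) (n : ℕ) (hn : n < 2 ^ m) :
    walsh n x = 1 := by
  rw [walsh_eq n m hn, Finset.prod_eq_one]
  intro k hk
  rw [h k (Finset.mem_range.1 hk)]; simp

lemma dk_add (N a b : ℕ) (hb : b ≤ 2 ^ N) (x : ℝ) :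
    dirichletKernel (2 ^ N * a + b) x =
      dirichletKernel (2 ^ N * a) x + walsh (2 ^ N * a) x * dirichletKernel b x := by
  unfold dirichletKernel
  rw [Finset.sum_range_add, Finset.mul_sum]
  congr 1
  apply Finset.sum_congr rfl
  intro k hk
  exact walsh_add _ _ _ (lt_of_lt_of_le (Finset.mem_range.1 hk) hb) x

section point
variable (m : ℕ) (x : ℝ) 

lemma dk1 (h1 : ∀ k < m, rademacher k x = 1) (j : ℕ) (hj : j ≤ 2 ^ m) :
    dirichletKernel j x = j := by
  unfold dirichletKernel
  rw [Finset.sum_congr rfl (g := fun _ => (1:ℝ))]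
  · simp
  · intro k hk
    exact walsh_one_of_lt m x h1 k (lt_of_lt_of_le (Finset.mem_range.1 hk) hj)

lemma dk2 (h1 : ∀ k < m, rademacher k x = 1) (h2 : rademacher m x = -1) (j : ℕ) (hj : j ≤ 2 ^ m) :
    dirichletKernel (2 ^ m + j) x = 2 ^ m - j := by
  have := dk_add m 1 j hj x
  rw [mul_one, walsh_two_pow, h2, dk1 m x h1 _ le_rfl, dk1 m x h1 _ hj] at this
  rw [this]; push_cast; ring

lemma dk3 (h1 : ∀ k < m, rademacher k x = 1) (h2 : rademacher m x = -1)
    (h3 : rademacher (m+1) x = -1) (j : ℕ) (hj : j ≤ 2 ^ (m+1)) :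
    dirichletKernel (2 ^ (m+1) + j) x = - dirichletKernel j x := by
  have := dk_add (m+1) 1 j hj x
  have h0 := dk2 m x h1 h2 (2^m) le_rfl
  rw [← two_mul, ← pow_succ'] at h0
  rw [mul_one, walsh_two_pow, h3, h0] at this
  rw [this]; push_cast; ring

lemma dk_bound2 (h1 : ∀ k < m, rademacher k x = 1) (h2 : rademacher m x = -1)
    (j : ℕ) (hj : j ≤ 2 ^ (m+1)) : |dirichletKernel j x| ≤ 2 ^ m := by
  rcases le_total j (2^m) with h | h
  · rw [dk1 m x h1 j h, abs_of_nonneg (by positivity)]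
    exact_mod_cast h
  · obtain ⟨k, rfl⟩ := Nat.exists_eq_add_of_le h
    have hk : k ≤ 2^m := by rw [pow_succ] at hj; omega
    rw [dk2 m x h1 h2 k hk]
    have : (k:ℝ) ≤ 2^m := by exact_mod_cast hk
    rw [abs_of_nonneg (by linarith)]
    have : (0:ℝ) ≤ k := by positivity
    linarith

lemma dk_bound (h1 : ∀ k < m, rademacher k x = 1) (h2 : rademacher m x = -1)
    (h3 : rademacher (m+1) x = -1)
    (j : ℕ) (hj : j ≤ 2 ^ (m+2)) : |dirichletKernel j x| ≤ 2 ^ m := by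
  rcases le_total j (2^(m+1)) with h | h
  · exact dk_bound2 m x h1 h2 j h
  · obtain ⟨k, rfl⟩ := Nat.exists_eq_add_of_le h
    have hk : k ≤ 2^(m+1) := by rw [pow_succ 2 (m+1)] at hj; omega
    rw [dk3 m x h1 h2 h3 k hk, abs_neg]
    exact dk_bound2 m x h1 h2 k hk

lemma dk_sum (h1 : ∀ k < m, rademacher k x = 1) (h2 : rademacher m x = -1)
    (h3 : rademacher (m+1) x = -1) :
    ∑ b ∈ Finset.range (2 ^ (m+2)), dirichletKernel b x = 0 := by
  rw [pow_succ 2 (m+1), mul_two, Finset.sum_range_add, ← Finset.sum_add_distrib]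
  apply Finset.sum_eq_zero
  intro k hk
  rw [dk3 m x h1 h2 h3 k (Finset.mem_range.1 hk).le]; ring

lemma dk4_zero (h1 : ∀ k < m, rademacher k x = 1) (h2 : rademacher m x = -1)
    (h3 : rademacher (m+1) x = -1) (a : ℕ) : dirichletKernel (2 ^ (m+2) * a) x = 0 := by
  have h0 : dirichletKernel (2 ^ (m+2)) x = 0 := by
    rw [pow_succ 2 (m+1), mul_two, dk3 m x h1 h2 h3 _ le_rfl]
    have := dk2 m x h1 h2 (2^m) le_rfl
    rw [← two_mul, ← pow_succ'] at this
    rw [this]; push_cast; ring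
  induction a with
  | zero => simp [dirichletKernel]
  | succ a ih => rw [mul_add, mul_one, dk_add (m+2) a _ le_rfl, ih, h0]; ring

lemma dk4 (h1 : ∀ k < m, rademacher k x = 1) (h2 : rademacher m x = -1)
    (h3 : rademacher (m+1) x = -1) (a b : ℕ) (hb : b ≤ 2 ^ (m+2)) :
    dirichletKernel (2 ^ (m+2) * a + b) x = walsh (2 ^ (m+2) * a) x * dirichletKernel b x := by
  rw [dk_add _ _ _ hb, dk4_zero m x h1 h2 h3, zero_add]

lemma block (D : ℕ → ℝ) (B : ℕ) (h q : ℝ) (hq : (B:ℝ) < q)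
    (hs : ∑ b ∈ Finset.range B, D b = 0) (hD : ∀ b < B, |D b| ≤ h) :
    |∑ b ∈ Finset.range B, D b / (q - b)| ≤ B * h * (1 / (q - B) - 1 / q) := by
  have e : ∑ b ∈ Finset.range B, D b / (q - b) =
      ∑ b ∈ Finset.range B, D b * (1 / (q - b) - 1 / q) := by
    have : ∑ b ∈ Finset.range B, D b * (1 / q) = 0 := by rw [← Finset.sum_mul, hs, zero_mul]
    rw [← sub_zero (∑ b ∈ Finset.range B, D b / (q - b)), ← this, ← Finset.sum_sub_distrib]
    apply Finset.sum_congr rfl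
    intro b _; ring
  rw [e]
  have hB : (0:ℝ) ≤ B := by positivity
  refine (Finset.abs_sum_le_sum_abs _ _).trans ?_
  have : ∑ b ∈ Finset.range B, |D b * (1 / (q - b) - 1 / q)| ≤
      ∑ b ∈ Finset.range B, h * (1 / (q - B) - 1 / q) := by
    apply Finset.sum_le_sum
    intro b hb
    have hb := Finset.mem_range.1 hb
    have hb' : (b:ℝ) ≤ B := by exact_mod_cast hb.le
    have hb0 : (0:ℝ) ≤ b := by positivity
    have i1 : 1 / q ≤ 1 / (q - b) := one_div_le_one_div_of_le (by linarith) (by linarith)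
    have i2 : 1 / (q - b) ≤ 1 / (q - B) := one_div_le_one_div_of_le (by linarith) (by linarith)
    rw [abs_mul, abs_of_nonneg (by linarith : (0:ℝ) ≤ 1 / (q - b) - 1 / q)]
    exact mul_le_mul (hD b hb) (by linarith) (by linarith) ((abs_nonneg _).trans (hD b hb))
  refine this.trans (le_of_eq ?_)
  simp; ring

lemma blocks (h1 : ∀ k < m, rademacher k x = 1) (h2 : rademacher m x = -1)
    (h3 : rademacher (m+1) x = -1) (p : ℝ) (A : ℕ) (hp : (2:ℝ) ^ (m+2) * A < p) :
    |∑ j ∈ Finset.range (2 ^ (m+2) * A), dirichletKernel j x / (p - j)| ≤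
      2 ^ (m+2) * 2 ^ m * (1 / (p - 2 ^ (m+2) * A) - 1 / p) := by
  induction A with
  | zero => simp
  | succ A ih =>
    have hpos : (0:ℝ) < 2 ^ (m+2) := by positivity
    push_cast at hp
    have ih := ih (by nlinarith)
    rw [mul_add, mul_one, Finset.sum_range_add]
    have hb := block (fun b => dirichletKernel b x) (2 ^ (m+2)) (2 ^ m) (p - 2 ^ (m+2) * A)
      (by push_cast; linarith) (dk_sum m x h1 h2 h3)
      (fun b hb => dk_bound m x h1 h2 h3 b hb.le)
    have e : ∑ b ∈ Finset.range (2 ^ (m+2)), dirichletKernel (2 ^ (m+2) * A + b) x /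
        (p - ((2 ^ (m+2) * A + b : ℕ) : ℝ)) = walsh (2 ^ (m+2) * A) x *
        ∑ b ∈ Finset.range (2 ^ (m+2)), dirichletKernel b x / (p - 2 ^ (m+2) * A - b) := by
      rw [Finset.mul_sum]
      apply Finset.sum_congr rfl
      intro b hb
      rw [dk4 m x h1 h2 h3 A b (Finset.mem_range.1 hb).le]
      push_cast
      rw [← sub_sub, mul_div_assoc]
    rw [e]
    refine (abs_add_le _ _).trans ?_
    rw [abs_mul, walsh_abs, one_mul]
    refine (add_le_add ih hb).trans (le_of_eq ?_)
    push_cast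
    rw [show p - 2 ^ (m+2) * ((A:ℝ) + 1) = p - 2 ^ (m+2) * A - 2 ^ (m+2) by ring]
    ring

end point

lemma main_sum (u : ℕ) :
    (u:ℝ) * (logSum u - 1) ≤ ∑ k ∈ Finset.range u, (k:ℝ) / (u - k) := by
  have e : ∑ k ∈ Finset.range u, (k:ℝ) / (u - k) =
      ∑ k ∈ Finset.range u, ((u:ℝ) * (1 / ((k:ℝ) + 1)) - 1) := by
    rw [← Finset.sum_range_reflect (fun k : ℕ => (k:ℝ) / (u - k))]
    apply Finset.sum_congr rfl
    intro k hk
    have hk := Finset.mem_range.1 hk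
    have : ((u - 1 - k : ℕ) : ℝ) = u - 1 - k := by
      rw [Nat.cast_sub (by omega), Nat.cast_sub (by omega)]; simp
    rw [this]
    have : (k:ℝ) + 1 ≠ 0 := by positivity
    rw [show (u:ℝ) - (u - 1 - k) = k + 1 by ring]
    field_simp
    ring
  rw [e, Finset.sum_sub_distrib, ← Finset.mul_sum]
  have hl : logSum u ≤ ∑ k ∈ Finset.range u, 1 / ((k:ℝ) + 1) := by
    unfold logSum
    have : Finset.Icc 1 (u - 1) = Finset.Ico 1 (u - 1 + 1) := by ext; simp
    rw [this, Finset.sum_Ico_eq_sum_range]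
    have h2 : ∀ k : ℕ, (1:ℝ) / ((1 + k : ℕ) : ℝ) = 1 / ((k:ℝ) + 1) := by
      intro k; push_cast; rw [add_comm]
    simp only [h2]
    apply Finset.sum_le_sum_of_subset_of_nonneg
    · apply Finset.range_mono; omega
    · intros; positivity
  have := mul_le_mul_of_nonneg_left hl (by positivity : (0:ℝ) ≤ u)
  simp only [Finset.sum_const, Finset.card_range, nsmul_eq_mul, mul_one]
  linarith

lemma FK_sum (p : ℕ) (x : ℝ) : ∑ i ∈ Finset.Ico 1 p, dirichletKernel (p - i) x / i =
    ∑ j ∈ Finset.range p, dirichletKernel j x / ((p:ℝ) - j) := by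
  rcases Nat.eq_zero_or_pos p with rfl | hp
  · simp
  have h0 : dirichletKernel 0 x = 0 := by simp [dirichletKernel]
  rw [Finset.range_eq_Ico, ← Finset.sum_Ioo_add_eq_sum_Ico hp, h0]
  have : Finset.Ioo 0 p = Finset.Ico 1 p := by ext; simp; omega
  rw [this, zero_div, add_zero]
  apply Finset.sum_nbij' (fun i => p - i) (fun i => p - i)
  · intro i hi; simp at hi ⊢; omega
  · intro i hi; simp at hi ⊢; omega
  · intro i hi; simp at hi ⊢; omega
  · intro i hi; simp at hi ⊢; omega
  · intro i hi
    simp at hi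
    rw [Nat.cast_sub hi.2.le]; simp

lemma point_bound (m : ℕ) (x : ℝ) (h1 : ∀ k < m, rademacher k x = 1) (h2 : rademacher m x = -1)
    (h3 : rademacher (m+1) x = -1) (A u : ℕ) (hu : u ≤ 2 ^ m) (hu2 : 2 ^ m ≤ 2 * u) (p : ℕ)
    (hp : p = 2 ^ (m+2) * A + (2 ^ (m+1) + u)) :
    (u:ℝ) * (logSum u - 13) ≤ |∑ i ∈ Finset.Ico 1 p, dirichletKernel (p - i) x / i| := by
  have hpos : (0:ℝ) < 2 ^ m := by positivity
  have hposN : 0 < 2 ^ m := by positivity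
  have hu' : (u:ℝ) ≤ 2 ^ m := by exact_mod_cast hu
  have hu2' : (2:ℝ) ^ m ≤ 2 * u := by exact_mod_cast hu2
  have hu0 : (0:ℝ) < u := by linarith
  have e1 : (2:ℝ) ^ (m+1) = 2 * 2 ^ m := by ring
  have e2 : (2:ℝ) ^ (m+2) = 4 * 2 ^ m := by ring
  have hpr : (p:ℝ) = 2 ^ (m+2) * A + (2 ^ (m+1) + u) := by rw [hp]; push_cast; ring
  rw [FK_sum]
  nth_rewrite 1 [hp]
  rw [Finset.sum_range_add]
  have hb := blocks m x h1 h2 h3 p A (by rw [hpr]; linarith)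
  have hb2 : (2:ℝ) ^ (m+2) * 2 ^ m * (1 / (p - 2 ^ (m+2) * A) - 1 / p) ≤ 4 * u := by
    rw [hpr, show (2:ℝ) ^ (m+2) * A + (2 ^ (m+1) + u) - 2 ^ (m+2) * A = 2 ^ (m+1) + u by ring]
    have i1 : (1:ℝ) / (2 ^ (m+1) + u) ≤ 1 / (2 * 2 ^ m) :=
      one_div_le_one_div_of_le (by positivity) (by linarith)
    have i2 : (0:ℝ) ≤ 1 / (2 ^ (m+2) * A + (2 ^ (m+1) + u)) := by positivity
    calc (2:ℝ) ^ (m+2) * 2 ^ m * (1 / (2 ^ (m+1) + u) - 1 / (2 ^ (m+2) * A + (2 ^ (m+1) + u)))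
        ≤ 2 ^ (m+2) * 2 ^ m * (1 / (2 * 2 ^ m)) := by gcongr; linarith
      _ = 2 * 2 ^ m := by rw [e2]; field_simp; try norm_num
      _ ≤ 4 * u := by linarith
  have e : ∑ b ∈ Finset.range (2 ^ (m+1) + u), dirichletKernel (2 ^ (m+2) * A + b) x /
        (p - ((2 ^ (m+2) * A + b : ℕ) : ℝ)) = walsh (2 ^ (m+2) * A) x *
        ∑ b ∈ Finset.range (2 ^ (m+1) + u), dirichletKernel b x / (2 ^ (m+1) + u - b) := by
    rw [Finset.mul_sum]
    apply Finset.sum_congr rfl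
    intro b hb
    have := Finset.mem_range.1 hb
    rw [dk4 m x h1 h2 h3 A b (by rw [pow_succ] at this; rw [pow_add]; omega), hpr]
    push_cast
    rw [mul_div_assoc]; congr 2; try ring
  rw [e]
  have hin : (u:ℝ) * (logSum u - 1) - 8 * u ≤
      |∑ b ∈ Finset.range (2 ^ (m+1) + u), dirichletKernel b x / ((2:ℝ) ^ (m+1) + u - b)| := by
    rw [Finset.sum_range_add]
    have f1 : |∑ b ∈ Finset.range (2 ^ (m+1)), dirichletKernel b x / ((2:ℝ) ^ (m+1) + u - b)|
        ≤ 8 * u := by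
      refine (Finset.abs_sum_le_sum_abs _ _).trans ?_
      have : ∑ b ∈ Finset.range (2 ^ (m+1)), |dirichletKernel b x / ((2:ℝ) ^ (m+1) + u - b)| ≤
          ∑ b ∈ Finset.range (2 ^ (m+1)), (2:ℝ) ^ m / u := by
        apply Finset.sum_le_sum
        intro b hb
        have hb := Finset.mem_range.1 hb
        have hb' : (b:ℝ) ≤ 2 ^ (m+1) := by exact_mod_cast hb.le
        rw [abs_div, abs_of_pos (by linarith : (0:ℝ) < 2 ^ (m+1) + u - b)]
        exact div_le_div₀ hpos.le (dk_bound2 m x h1 h2 b hb.le) hu0 (by linarith)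
      refine this.trans ?_
      simp only [Finset.sum_const, Finset.card_range, nsmul_eq_mul]
      push_cast
      rw [e1, ← mul_div_assoc, div_le_iff₀ hu0]
      nlinarith
    have f2 : ∑ k ∈ Finset.range u, dirichletKernel (2 ^ (m+1) + k) x /
        ((2:ℝ) ^ (m+1) + u - ((2 ^ (m+1) + k : ℕ) : ℝ)) =
        - ∑ k ∈ Finset.range u, (k:ℝ) / (u - k) := by
      rw [← Finset.sum_neg_distrib]
      apply Finset.sum_congr rfl
      intro k hk
      have hk := Finset.mem_range.1 hk
      rw [dk3 m x h1 h2 h3 k (by rw [pow_succ]; omega), dk1 m x h1 k (by omega)]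
      push_cast
      rw [neg_div]; congr 2; try ring
    rw [f2]
    have := main_sum u
    have g := neg_abs_le (∑ b ∈ Finset.range (2 ^ (m+1)),
      dirichletKernel b x / ((2:ℝ) ^ (m+1) + u - b) + -∑ k ∈ Finset.range u, (k:ℝ) / (u - k))
    have g2 := le_abs_self (∑ b ∈ Finset.range (2 ^ (m+1)),
      dirichletKernel b x / ((2:ℝ) ^ (m+1) + u - b))
    linarith
  set S := ∑ b ∈ Finset.range (2 ^ (m+1) + u), dirichletKernel b x / ((2:ℝ) ^ (m+1) + u - b)
  set R := ∑ j ∈ Finset.range (2 ^ (m+2) * A), dirichletKernel j x / ((p:ℝ) - j)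
  have hW : |walsh (2 ^ (m+2) * A) x * S| = |S| := by rw [abs_mul, walsh_abs, one_mul]
  have := abs_sub_abs_le_abs_sub (walsh (2 ^ (m+2) * A) x * S) (-R)
  rw [abs_neg, sub_neg_eq_add, add_comm _ R, hW] at this
  linarith

lemma rad_vals (t : ℕ) (x : ℝ) (hx : x ∈ Set.Ico ((3/8 : ℝ) / 4 ^ t) ((1/2) / 4 ^ t)) :
    (∀ k < 2 * t + 1, rademacher k x = 1) ∧ rademacher (2*t+1) x = -1 ∧
      rademacher (2*t+1+1) x = -1 := by
  have hp : (0:ℝ) < 4 ^ t := by positivity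
  have hl := (div_le_iff₀ hp).1 hx.1
  have hr := (lt_div_iff₀ hp).1 hx.2
  have hx0 : 0 ≤ x := le_trans (by positivity) hx.1
  have e4 : (2:ℝ) ^ (2*t) = 4 ^ t := by rw [pow_mul]; norm_num
  refine ⟨?_, ?_, ?_⟩
  · intro k hk
    have : (2:ℝ) ^ k ≤ 4 ^ t := by
      rw [← e4]; exact pow_le_pow_right₀ (by norm_num) (by omega)
    have h1 : (2:ℝ) ^ k * x ≤ 4 ^ t * x := by gcongr
    have h0 : (0:ℝ) ≤ 2 ^ k * x := by positivity
    unfold rademacher r0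
    rw [Int.fract_eq_self.2 ⟨h0, by linarith⟩, if_pos (by linarith)]
  · unfold rademacher r0
    rw [pow_succ, e4]
    rw [Int.fract_eq_self.2 ⟨by linarith, by linarith⟩, if_neg (by linarith)]
  · unfold rademacher r0
    rw [pow_succ, pow_succ, e4]
    have : Int.fract ((4:ℝ) ^ t * 2 * 2 * x) = 4 ^ t * 2 * 2 * x - 1 := by
      rw [Int.fract_eq_iff]
      exact ⟨by linarith, by linarith, 1, by simp⟩
    rw [this, if_neg (by linarith)]

lemma pIdx_succ (n : ℕ) : pIdx (n+1) = pIdx n + 4 ^ (n+1) := by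
  unfold pIdx; rw [Finset.sum_range_succ]

lemma pIdx_ge (n : ℕ) : 4 ^ n ≤ pIdx n := by
  cases n with
  | zero => simp [pIdx]
  | succ n => rw [pIdx_succ]; omega

lemma pIdx_le (n : ℕ) : pIdx n ≤ 2 * 4 ^ n := by
  induction n with
  | zero => simp [pIdx]
  | succ n ih => rw [pIdx_succ, pow_succ]; omega

lemma pIdx_mono : Monotone pIdx := by
  apply monotone_nat_of_le_succ
  intro n; rw [pIdx_succ]; exact Nat.le_add_right _ _

lemma pIdx_split (t d : ℕ) :
    ∃ A, pIdx (t + 1 + d) = 2 ^ (2*t+1+2) * A + (2 ^ (2*t+1+1) + pIdx t) := by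
  have e : 2 ^ (2*t) = 4 ^ t := by rw [pow_mul]; norm_num
  induction d with
  | zero => 
    refine ⟨0, ?_⟩
    rw [add_zero, pIdx_succ]
    simp only [pow_succ, pow_add, e]; ring
  | succ d ih =>
    obtain ⟨A, hA⟩ := ih
    refine ⟨A + 2 * 4 ^ d, ?_⟩
    rw [← add_assoc, pIdx_succ, hA]
    simp only [pow_succ, pow_add, e]; ring

lemma logSum_mono : Monotone logSum := by
  intro a b hab
  unfold logSum
  apply Finset.sum_le_sum_of_subset_of_nonneg
  · apply Finset.Icc_subset_Icc_right; omega
  · intros; positivity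

lemma logSum_eq (n : ℕ) : logSum n = (harmonic (n-1) : ℝ) := by
  unfold logSum
  rw [harmonic_eq_sum_Icc]; push_cast
  simp

lemma logSum_ge (n : ℕ) (hn : 1 ≤ n) : Real.log n ≤ logSum n := by
  rw [logSum_eq]
  have := log_add_one_le_harmonic (n-1)
  rwa [show n - 1 + 1 = n by omega] at this

lemma logSum_le (n : ℕ) (hn : 2 ≤ n) : logSum n ≤ 1 + Real.log n := by
  rw [logSum_eq]
  refine (harmonic_le_one_add_log (n-1)).trans ?_
  gcongr
  · exact_mod_cast (by omega : 0 < n - 1)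
  · omega

lemma log4 : (1:ℝ) ≤ Real.log 4 ∧ Real.log 4 ≤ 2 := by
  have : Real.log 4 = 2 * Real.log 2 := by
    rw [show (4:ℝ) = 2 ^ 2 by norm_num, Real.log_pow]; norm_num
  rw [this]
  constructor <;> nlinarith [Real.log_two_gt_d9, Real.log_two_lt_d9]

lemma logSum_p_ge (t : ℕ) : (t:ℝ) ≤ logSum (pIdx t) := by
  have h := pIdx_ge t
  have h1 : 1 ≤ 4 ^ t := Nat.one_le_pow _ _ (by norm_num)
  refine le_trans ?_ (logSum_ge _ (h1.trans h))
  have : Real.log ((4:ℝ) ^ t) ≤ Real.log (pIdx t) := by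
    apply Real.log_le_log (by positivity)
    exact_mod_cast h
  rw [Real.log_pow] at this
  nlinarith [log4.1, (by positivity : (0:ℝ) ≤ t)]

lemma logSum_p_le (n : ℕ) (hn : 1 ≤ n) : logSum (pIdx n) ≤ 5 * n := by
  have h := pIdx_le n
  have h4 : 4 ^ 1 ≤ 4 ^ n := Nat.pow_le_pow_right (by norm_num) hn
  have h2 := pIdx_ge n
  refine (logSum_le _ (by omega)).trans ?_
  have : Real.log (pIdx n) ≤ Real.log ((4:ℝ) ^ (n+1)) := by
    apply Real.log_le_log
    · exact_mod_cast (by omega : 0 < pIdx n)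
    · have : pIdx n ≤ 4 ^ (n+1) := by rw [pow_succ]; omega
      exact_mod_cast this
  rw [Real.log_pow] at this
  push_cast at this
  have hn' : (1:ℝ) ≤ n := by exact_mod_cast hn
  nlinarith [log4.2]

lemma m0_spec (n : ℕ) (hn : m₀ ≤ n) : (2:ℝ) ^ 19 ≤ logSum (pIdx (n/2)) := by
  have hne : {m : ℕ | 1 < mTilde m}.Nonempty := by
    obtain ⟨N, hN⟩ : ∃ N : ℕ, (2:ℝ) ^ 20 ≤ N := exists_nat_ge _
    refine ⟨2 * (N + 1), ?_⟩
    have e : 2 * (N + 1) / 2 = N + 1 := by omega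
    have h1 : pIdx N ≤ pIdx (N + 1) - 1 := by
      rw [pIdx_succ]
      have : 1 ≤ 4 ^ (N + 1) := Nat.one_le_pow _ _ (by norm_num)
      omega
    have h2 := (logSum_p_ge N).trans (logSum_mono h1)
    have : (2:ℤ) ≤ mTilde (2 * (N + 1)) := by
      unfold mTilde
      rw [e, Int.le_floor]
      push_cast
      norm_num at hN ⊢
      have : (1048576:ℝ) ≤ N := by exact_mod_cast hN
      linarith
    show 1 < mTilde (2 * (N + 1))
    exact this
  have hm : 1 < mTilde m₀ := Nat.sInf_mem hne
  have hm2 : (2:ℤ) ≤ mTilde m₀ := hm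
  unfold mTilde at hm2
  rw [Int.le_floor] at hm2
  have : logSum (pIdx (m₀ / 2) - 1) ≤ logSum (pIdx (n/2)) :=
    logSum_mono ((Nat.sub_le _ _).trans (pIdx_mono (Nat.div_le_div_right hn)))
  push_cast at hm2
  norm_num at hm2 ⊢
  linarith

lemma FK_bound (n t : ℕ) (ht : t < n) (hl : (26:ℝ) ≤ logSum (pIdx t)) (x : ℝ)
    (hx : x ∈ Set.Ico ((3/8 : ℝ) / 4 ^ t) ((1/2) / 4 ^ t)) :
    (4 ^ t * t / 2) / (5 * n) ≤ |FKernel (pIdx n) x| := by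
  obtain ⟨h1, h2, h3⟩ := rad_vals t x hx
  obtain ⟨d, rfl⟩ := Nat.exists_eq_add_of_le (Nat.succ_le_of_lt ht)
  obtain ⟨A, hA⟩ := pIdx_split t d
  have e : 2 ^ (2*t+1) = 2 * 4 ^ t := by rw [pow_succ, pow_mul]; ring
  have hg := pIdx_ge t
  have := point_bound (2*t+1) x h1 h2 h3 A (pIdx t) (by rw [e]; exact pIdx_le t)
    (by rw [e]; omega) _ hA
  have hpos : (0:ℝ) < logSum (pIdx (t+1+d)) :=
    lt_of_lt_of_le (by linarith) (logSum_mono (pIdx_mono (by omega : t ≤ t+1+d)))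
  have hle := logSum_p_le (t+1+d) (by omega)
  have ht' := logSum_p_ge t
  have hg' : (4:ℝ) ^ t ≤ pIdx t := by exact_mod_cast hg
  have hn0 : (0:ℝ) ≤ t := by positivity
  unfold FKernel
  rw [abs_mul, abs_of_pos (by positivity : 0 < 1 / logSum (pIdx (t+1+d))), one_div_mul_eq_div]
  apply div_le_div₀ (abs_nonneg _) _ hpos hle
  refine le_trans ?_ this
  calc (4:ℝ) ^ t * t / 2 = 4 ^ t * (t / 2) := by ring
    _ ≤ pIdx t * (logSum (pIdx t) - 13) := by
      apply mul_le_mul hg' (by linarith) (by positivity) (by positivity)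

lemma r0_meas : Measurable r0 := by
  unfold r0
  exact Measurable.ite (measurableSet_lt measurable_fract measurable_const)
    measurable_const measurable_const

lemma walsh_meas (n : ℕ) : Measurable (walsh n) := by
  unfold walsh
  apply Finset.measurable_fun_prod
  intro k _
  split_ifs
  · exact r0_meas.comp (measurable_const.mul measurable_id)
  · exact measurable_const

lemma walsh_int (n : ℕ) : IntegrableOn (walsh n) (Set.Ico (0:ℝ) 1) := by
  apply Measure.integrableOn_of_bounded (M := 1) (by simp) (walsh_meas n).aestronglyMeasurable
  exact Filter.Eventually.of_forall fun x => by rw [Real.norm_eq_abs, walsh_abs]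

lemma FK_int (n : ℕ) : IntegrableOn (FKernel n) (Set.Ico (0:ℝ) 1) := by
  unfold FKernel
  apply Integrable.const_mul
  apply integrable_finsetSum
  intro i _
  apply Integrable.div_const
  unfold dirichletKernel
  exact integrable_finsetSum _ fun k _ => walsh_int k

/-- `L^1` lower bound for the Nörlund logarithmic kernel:
`∫_0^1 |F_{p_n}| ≥ c·n` for `n ≥ m₀`. -/
theorem stmt13 : ∃ c > (0:ℝ), ∀ n : ℕ, m₀ ≤ n →
    c * n ≤ ∫ x in Set.Ico (0:ℝ) 1, |FKernel (pIdx n) x| := by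
  refine ⟨1/640, by norm_num, fun n hn => ?_⟩
  have hl := m0_spec n hn
  have hn2 : 2 ≤ n := by
    by_contra h
    have h0 : n / 2 = 0 := by omega
    rw [h0] at hl
    norm_num [pIdx, logSum] at hl
  set E : ℕ → Set ℝ := fun t => Set.Ico ((3/8 : ℝ) / 4 ^ t) ((1/2) / 4 ^ t) with hE
  have hsub : ∀ t, E t ⊆ Set.Ico (0:ℝ) 1 := by
    intro t x hx
    have h4 : (1:ℝ) ≤ 4 ^ t := one_le_pow₀ (by norm_num)
    refine ⟨le_trans (by positivity) hx.1, lt_of_lt_of_le hx.2 ?_⟩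
    rw [div_le_iff₀ (by positivity)]; linarith
  have hint : IntegrableOn (fun x => |FKernel (pIdx n) x|) (Set.Ico (0:ℝ) 1) :=
    (FK_int (pIdx n)).abs
  have hlt : ∀ s t, s < t → Disjoint (E s) (E t) := by
    intro s t hst
    rw [Set.disjoint_left]
    intro x hs ht
    have h1 : (1/2 : ℝ) / 4 ^ t ≤ (3/8) / 4 ^ s := by
      have : (4:ℝ) ^ (s+1) ≤ 4 ^ t := pow_le_pow_right₀ (by norm_num) hst
      rw [pow_succ] at this
      have hs0 : (0:ℝ) < 4 ^ s := by positivity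
      rw [div_le_div_iff₀ (by positivity) (by positivity)]
      linarith
    exact absurd (lt_of_lt_of_le ht.2 h1) (not_lt.2 hs.1)
  have hdisj : Set.Pairwise (↑(Finset.Ico (n/2) n)) (Function.onFun Disjoint E) := by
    intro s _ t _ hst
    rcases lt_or_gt_of_ne hst with h | h
    · exact hlt s t h
    · exact (hlt t s h).symm
  have hU := integral_biUnion_finset (μ := volume) (f := fun x => |FKernel (pIdx n) x|)
    (Finset.Ico (n/2) n) (s := E) (fun t _ => measurableSet_Ico) hdisj
    (fun t _ => hint.mono_set (hsub t))
  have hge : ∫ x in ⋃ t ∈ Finset.Ico (n/2) n, E t, |FKernel (pIdx n) x| ≤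
      ∫ x in Set.Ico (0:ℝ) 1, |FKernel (pIdx n) x| := by
    apply setIntegral_mono_set hint
    · exact Filter.Eventually.of_forall fun x => abs_nonneg _
    · exact (Set.iUnion₂_subset fun t _ => hsub t).eventuallyLE
  refine le_trans ?_ hge
  rw [hU]
  have hn0 : (0:ℝ) < n := by exact_mod_cast (by omega : 0 < n)
  have hterm : ∀ t ∈ Finset.Ico (n/2) n, (1/320 : ℝ) ≤ ∫ x in E t, |FKernel (pIdx n) x| := by
    intro t ht
    have ht := Finset.mem_Ico.1 ht
    have hlt : (26:ℝ) ≤ logSum (pIdx t) := by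
      have := logSum_mono (pIdx_mono ht.1)
      norm_num at hl
      linarith
    have h := setIntegral_ge_of_const_le_real (μ := volume) (s := E t)
      (f := fun x => |FKernel (pIdx n) x|) (c := (4 ^ t * t / 2) / (5 * n)) measurableSet_Ico
      (by simp [hE]) (fun x hx => FK_bound n t ht.2 hlt x hx) (hint.mono_set (hsub t))
    refine le_trans ?_ h
    have hp : (0:ℝ) < 4 ^ t := by positivity
    have hv : volume.real (E t) = 1 / 8 / 4 ^ t := by
      rw [hE, Real.volume_real_Ico_of_le]
      · ring
      · exact div_le_div_of_nonneg_right (by norm_num) hp.le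
    have h4 : (n:ℝ) ≤ 4 * t := by exact_mod_cast (by omega : n ≤ 4 * t)
    rw [hv]
    have : (4:ℝ) ^ t * t / 2 / (5 * n) * (1 / 8 / 4 ^ t) = t / (80 * n) := by
      field_simp; ring
    rw [this, div_le_div_iff₀ (by norm_num) (by positivity)]
    linarith
  have hs := Finset.card_nsmul_le_sum _ _ _ hterm
  refine le_trans ?_ hs
  rw [Nat.card_Ico, nsmul_eq_mul]
  have : (n:ℝ) ≤ 2 * ((n - n/2 : ℕ) : ℝ) := by exact_mod_cast (by omega : n ≤ 2 * (n - n/2))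
  linarith

end
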